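/- Let n = 2 or n = 3, and let C ⊆ ℝⁿ be an infinite rational curve. If C is invariant under a translation x ↦ x + v with v ≠ 0, then C is a line. -/

import Mathlib

open Polynomial Matrix RealInnerProductSpace

noncomputable section

/-- A rational parametrization of a curve in `ℝⁿ`: components `pᵢ/qᵢ` with `qᵢ ≠ 0` and
`gcd(pᵢ, qᵢ) = 1`. -/
structure RatParam (n : ℕ) where
  p : Fin n → Polynomial ℝ
  q : Fin n → Polynomial ℝ
  q_ne_zero : ∀ i, q i ≠ 0
  coprime : ∀ i, IsCoprime (p i) (q i)

namespace RatParam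

variable {n : ℕ}

/-- The (cofinite) set of parameters where the parametrization is defined. -/
def domain (X : RatParam n) : Set ℝ := {t | ∀ i, (X.q i).eval t ≠ 0}

/-- The value of the parametrization at a parameter `t`. -/
def eval (X : RatParam n) (t : ℝ) : EuclideanSpace ℝ (Fin n) :=
  WithLp.toLp 2 (fun i => (X.p i).eval t / (X.q i).eval t)

/-- The associated rational curve: the image of the parametrization over its domain. -/
def curve (X : RatParam n) : Set (EuclideanSpace ℝ (Fin n)) := X.eval '' X.domain

/-- A parametrization is proper if it is injective outside some finite set of parameters. -/
def Proper (X : RatParam n) : Prop :=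
  ∃ F : Set ℝ, F.Finite ∧ Set.InjOn X.eval (X.domain \ F)

end RatParam

/-- A line in `ℝⁿ`: a one-dimensional affine subspace, as a set. -/
def IsLine {n : ℕ} (S : Set (EuclideanSpace ℝ (Fin n))) : Prop :=
  ∃ (p v : EuclideanSpace ℝ (Fin n)), v ≠ 0 ∧ S = {x | ∃ s : ℝ, x = p + s • v}

theorem aux_shift {n : ℕ} (C : Set (EuclideanSpace ℝ (Fin n))) (v : EuclideanSpace ℝ (Fin n))
    (htrans : (fun x => x + v) '' C = C) (x : EuclideanSpace ℝ (Fin n)) (hx : x ∈ C) (m : ℤ) :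
    x + (m : ℝ) • v ∈ C := by
  have hf : ∀ y, y ∈ C → y + v ∈ C := fun y hy => htrans ▸ Set.mem_image_of_mem _ hy
  have hb : ∀ y, y ∈ C → y - v ∈ C := by
    intro y hy
    rw [← htrans] at hy
    obtain ⟨z, hz, rfl⟩ := hy
    simpa using hz
  induction m using Int.induction_on with
  | zero => simpa using hx
  | succ k ih =>
    have := hf _ ih
    convert this using 1
    push_cast
    module
  | pred k ih =>
    have := hb _ ih
    convert this using 1
    push_cast
    module

theorem aux_finite {n : ℕ} (X : RatParam n) : (X.domainᶜ).Finite := by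
  have : X.domainᶜ ⊆ ⋃ i, {t | (X.q i).IsRoot t} := by
    intro t ht
    simpa [RatParam.domain] using ht
  exact (Set.finite_iUnion fun i => Polynomial.finite_setOfPred_isRoot (X.q_ne_zero i)).subset this

theorem aux_const {n : ℕ} (X : RatParam n) (i j : Fin n) (a b c : ℝ) (S : Set ℝ)
    (hS : S.Infinite) (hSD : S ⊆ X.domain)
    (h : ∀ t ∈ S, a * X.eval t i - b * X.eval t j = c) (t : ℝ) (ht : t ∈ X.domain) :
    a * X.eval t i - b * X.eval t j = c := by
  have key : ∀ t ∈ X.domain, (a * X.eval t i - b * X.eval t j = c ↔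
      (C a * X.p i * X.q j - C b * X.p j * X.q i - C c * X.q i * X.q j).eval t = 0) := by
    intro t ht
    have h1 := ht i
    have h2 := ht j
    simp only [RatParam.eval, eval_sub, eval_mul, eval_C]
    rw [← sub_eq_zero]
    have : a * (eval t (X.p i) / eval t (X.q i)) - b * (eval t (X.p j) / eval t (X.q j)) - c
      = (a * eval t (X.p i) * eval t (X.q j) - b * eval t (X.p j) * eval t (X.q i) -
          c * eval t (X.q i) * eval t (X.q j)) / (eval t (X.q i) * eval t (X.q j)) := by
      field_simp
    rw [this, div_eq_zero_iff]
    simp [h1, h2]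
  have hz := Polynomial.eq_zero_of_infinite_isRoot _
    (hS.mono fun s hs => (key s (hSD hs)).1 (h s hs))
  rw [key t ht, hz, eval_zero]

/-- Let `n = 2` or `n = 3`, and let `C ⊆ ℝⁿ` be an infinite rational curve. If
`C` is invariant under a translation `x ↦ x + v` with `v ≠ 0`, then `C` is a line. -/
theorem statement_9 {n : ℕ} (hn : n = 2 ∨ n = 3) (X : RatParam n)
    (C : Set (EuclideanSpace ℝ (Fin n))) (hC : C = X.curve) (hCinf : C.Infinite)
    (v : EuclideanSpace ℝ (Fin n)) (hv : v ≠ 0)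
    (htrans : (fun x => x + v) '' C = C) :
    IsLine C := by
  subst hC
  obtain ⟨P, hP⟩ := hCinf.nonempty
  have hsh := aux_shift _ v htrans
  obtain ⟨i0, hi0⟩ : ∃ i, v i ≠ 0 := by
    by_contra! hcon
    exact hv (by ext i; simpa using hcon i)
  have hk : ∀ k : ℕ, ∃ t ∈ X.domain, X.eval t = P + (k : ℝ) • v := fun k => by
    simpa [RatParam.curve] using hsh P hP k
  choose τ hτD hτ using hk
  have hτinj : Function.Injective τ := by
    intro j k hjk
    have h := hτ j
    rw [hjk, hτ k] at h
    have h2 := congrArg (fun x : EuclideanSpace ℝ (Fin n) => x i0) h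
    simp [hi0] at h2
    exact h2.symm
  have hconst : ∀ t ∈ X.domain, ∀ i,
      v i0 * X.eval t i - v i * X.eval t i0 = v i0 * P i - v i * P i0 := by
    intro t ht i
    refine aux_const X i i0 _ _ _ (Set.range τ) (Set.infinite_range_of_injective hτinj) ?_ ?_ t ht
    · rintro _ ⟨k, rfl⟩
      exact hτD k
    · rintro _ ⟨k, rfl⟩
      rw [hτ k]
      simp
      ring
  have hline : ∀ t ∈ X.domain, X.eval t = P + ((X.eval t i0 - P i0) / v i0) • v := by
    intro t ht
    ext i
    have := hconst t ht i
    simp only [PiLp.add_apply, PiLp.smul_apply, smul_eq_mul]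
    field_simp
    linarith
  refine ⟨P, v, hv, Set.Subset.antisymm ?_ ?_⟩
  · rintro _ ⟨t, ht, rfl⟩
    exact ⟨_, hline t ht⟩
  rintro _ ⟨y, rfl⟩
  by_contra hy
  -- every `y + m` is missed
  have hmiss : ∀ m : ℤ, ∀ t ∈ X.domain, (X.eval t i0 - P i0) / v i0 ≠ y + m := by
    intro m t ht h
    apply hy
    have h1 := hsh (X.eval t) ⟨t, ht, rfl⟩ (-m)
    rw [hline t ht, h] at h1
    convert h1 using 1
    push_cast
    module
  have hbad : ∀ j k : ℕ, j < k → ∃ b ∈ Set.uIcc (τ j) (τ k), b ∉ X.domain := by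
    intro j k hjk
    by_contra! hcon
    have hc : ContinuousOn (fun t => (X.eval t i0 - P i0) / v i0) (Set.uIcc (τ j) (τ k)) := by
      refine ContinuousOn.div_const (ContinuousOn.sub ?_ continuousOn_const) _
      exact ContinuousOn.div (X.p i0).continuousOn (X.q i0).continuousOn
        (fun t ht => hcon t ht i0)
    have hval : ∀ k, (X.eval (τ k) i0 - P i0) / v i0 = k := by
      intro k
      rw [hτ k]
      simp [hi0]
    have hmem : y + (⌈(j : ℝ) - y⌉ : ℝ) ∈ Set.uIcc (j : ℝ) k := by
      have h1 := Int.le_ceil ((j : ℝ) - y)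
      have h2 := Int.ceil_lt_add_one ((j : ℝ) - y)
      have h3 : (j : ℝ) + 1 ≤ k := by exact_mod_cast hjk
      rw [Set.uIcc_of_le (by linarith)]
      constructor <;> linarith
    have hivt := intermediate_value_uIcc hc
    simp only [hval] at hivt
    obtain ⟨t, ht, hte⟩ := hivt hmem
    exact hmiss _ t (hcon t ht) hte
  have hfin := aux_finite X
  have hg : Function.Injective (fun k : ℕ =>
      (⟨{b | b ∉ X.domain ∧ b < τ k}, fun b hb => hb.1⟩ : {s : Set ℝ // s ⊆ X.domainᶜ})) := by
    have main : ∀ j k : ℕ, j < k →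
        {b | b ∉ X.domain ∧ b < τ j} ≠ {b | b ∉ X.domain ∧ b < τ k} := by
      intro j k hjk h
      obtain ⟨b, hb, hbD⟩ := hbad j k hjk
      have hj : b ≠ τ j := fun e => hbD (e ▸ hτD j)
      have hk : b ≠ τ k := fun e => hbD (e ▸ hτD k)
      have h1 : b < τ j ↔ b < τ k := by
        have := Set.ext_iff.1 h b
        simpa [hbD] using this
      rcases Set.mem_uIcc.1 hb with ⟨h2, h3⟩ | ⟨h2, h3⟩
      · exact absurd (h1.2 (lt_of_le_of_ne h3 hk)) (not_lt.2 h2)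
      · exact absurd (h1.1 (lt_of_le_of_ne h3 hj)) (not_lt.2 h2)
    intro j k h
    have hsub := Subtype.ext_iff.1 h
    rcases lt_trichotomy j k with hl | hl | hl
    · exact absurd hsub (main j k hl)
    · exact hl
    · exact absurd hsub.symm (main k j hl)
  have : Finite {s : Set ℝ // s ⊆ X.domainᶜ} := hfin.finite_subsets.to_subtype
  exact not_injective_infinite_finite _ hg
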